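/- If integers X, Y, Z satisfy X + Y + Z = 3 and X^3 + Y^3 + Z^3 = 3, and Z is the (a) negative one among the three, then Z - 3 divides 8; consequently if Z < 0 then Z = -5 or Z = -1. -/

import Mathlib

theorem stmt4 (X Y Z : ℤ) (h1 : X + Y + Z = 3) (h2 : X^3 + Y^3 + Z^3 = 3)
    (h3 : Z < 0) : (Z - 3) ∣ 8 ∧ (Z = -5 ∨ Z = -1) := by
  obtain rfl : X = 3 - Y - Z := by linarith
  have key : (8 : ℤ) = (Z - 3) * (-((Y + Z) * (3 - Y))) := by
    have h : 3 * ((Z - 3) * (-((Y + Z) * (3 - Y)))) = 3 * 8 := by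
      linear_combination -h2
    linarith
  have hd : (Z - 3) ∣ 8 := ⟨_, key⟩
  refine ⟨hd, ?_⟩
  have hle : -(Z - 3) ≤ 8 := Int.le_of_dvd (by norm_num) ((neg_dvd).mpr hd)
  have hlo : -5 ≤ Z := by linarith
  clear key h1 h2
  interval_cases Z <;> revert hd <;> decide
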